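/- Lorentz-space dispersive estimate: fix d ≥ 1, 2 < r < ∞, and 1 ≤ θ ≤ ∞, and let r' be the conjugate exponent of r. Then for every t ≠ 0 and every u_0 ∈ L^{r',θ}(ℝ^d), ‖e^{itΔ}u_0‖_{L^{r,θ}(ℝ^d)} ≤ C |t|^{−d(1/2 − 1/r)} ‖u_0‖_{L^{r',θ}(ℝ^d)}, with C depending only on d, r, θ. -/

import Mathlib

open MeasureTheory Set
open scoped ENNReal Real

noncomputable section

/-- The free Schrödinger propagator `e^{itΔ}` acting on functions on a `d`-dimensional space:
for `t ≠ 0`, `(e^{itΔ}f)(x) = (4πit)^{-d/2} ∫ e^{i|x-y|²/(4t)} f(y) dy`, and `e^{i0Δ}f = f`. -/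
def schrod {E : Type*} [NormedAddCommGroup E] [MeasureSpace E] (d : ℕ) (t : ℝ) (f : E → ℂ) :
    E → ℂ :=
  if t = 0 then f
  else fun x =>
    (4 * (Real.pi : ℂ) * Complex.I * (t : ℂ)) ^ (-(d : ℂ) / 2) *
      ∫ y, Complex.exp (Complex.I * ((‖x - y‖ ^ 2 : ℝ) : ℂ) / (4 * (t : ℂ))) * f y

/-- Mixed Lebesgue norm `‖u‖_{L^p_t L^q_x (I × space)}`. -/
def mixedNorm {α : Type*} [MeasurableSpace α] (ν : Measure α) (I : Set ℝ) (p q : ℝ≥0∞)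
    (u : ℝ → α → ℂ) : ℝ≥0∞ :=
  if p = ∞ then essSup (fun t => eLpNorm (u t) q ν) (volume.restrict I)
  else (∫⁻ t in I, eLpNorm (u t) q ν ^ p.toReal) ^ (1 / p.toReal)

/-- Lorentz quasinorm `p^{1/q} ‖ λ · ν({g > λ})^{1/p} ‖_{L^q((0,∞), dλ/λ)}`
for an `ℝ≥0∞`-valued function `g`. -/
def lorentzNorm {α : Type*} [MeasurableSpace α] (ν : Measure α) (p q : ℝ≥0∞)
    (g : α → ℝ≥0∞) : ℝ≥0∞ :=
  if q = ∞ then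
    ⨆ l ∈ Set.Ioi (0 : ℝ), ENNReal.ofReal l * ν {x | ENNReal.ofReal l < g x} ^ p⁻¹.toReal
  else
    (p * ∫⁻ l in Set.Ioi (0 : ℝ),
        (ENNReal.ofReal l * ν {x | ENNReal.ofReal l < g x} ^ p⁻¹.toReal) ^ q.toReal /
          ENNReal.ofReal l) ^ q⁻¹.toReal

/-- Lorentz quasinorm `‖f‖_{L^{p,q}}` of a scalar function. -/
def lorentzNormC {α : Type*} [MeasurableSpace α] (ν : Measure α) (p q : ℝ≥0∞)
    (f : α → ℂ) : ℝ≥0∞ :=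
  lorentzNorm ν p q fun x => (‖f x‖₊ : ℝ≥0∞)

/-- Lorentz-in-time mixed norm `‖u‖_{L^{p,q}_t L^r_x (I × space)}`. -/
def lorentzMixedNorm {α : Type*} [MeasurableSpace α] (ν : Measure α) (I : Set ℝ)
    (p q r : ℝ≥0∞) (u : ℝ → α → ℂ) : ℝ≥0∞ :=
  lorentzNorm (volume.restrict I) p q fun t => eLpNorm (u t) r ν

/-- The nonlinearity `|f|^a f`. -/
def nonlin {E : Type*} (a : ℝ) (f : E → ℂ) : E → ℂ := fun x => ((‖f x‖ ^ a : ℝ) : ℂ) * f x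

/-!
Real interpolation between the bounds `L¹ → L^∞`, with constant `A = (4π|t|)^{-d/2}`, and
`L² → L²`, with constant `1`, which hold for `e^{itΔ}` because it is, up to multiplication by
quadratic phases and a dilation, the Fourier transform.

For every `τ`, cut `f` at the height `f*(τ)` into a peak, of support at most `τ`, and a remainder.
The `L¹` norm of the peak and the `L²` norm of the remainder are at most sums of the values of `f*`
at the dyadic multiples of `τ`, so the endpoint bounds control `(Tf)*` at the point
`σ = (B/A)² τ⁻¹`, where both contributions scale alike. Multiplied by `σ^{1/r}`, this says that
`σ^{1/r} (Tf)*(σ)` is at most a sum of dyadic dilates of `τ^{1/r'} f*(τ)` with weights which, as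
`r > 2`, decay geometrically. Dilations and the inversion `τ ↦ (B/A)² τ⁻¹` preserve `dτ/τ`, so
Minkowski's inequality in `L^θ(dτ/τ)` gives the claim for all `θ` at once.
-/

section CountableMinkowski

variable {α ι : Type*} [MeasurableSpace α] {ν : Measure α} [Countable ι]

lemma eLpNorm_iSup_le_of_directed {u : ι → α → ℝ≥0∞} (hu : ∀ i, AEMeasurable (u i) ν)
    (hdir : Directed (· ≤ ·) u) {q c : ℝ≥0∞} (hc : ∀ i, eLpNorm (u i) q ν ≤ c) :
    eLpNorm (fun x => ⨆ i, u i x) q ν ≤ c := by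
  rcases eq_or_ne q 0 with rfl | hq
  · simp
  rcases eq_or_ne q ∞ with rfl | hq_top
  · refine eLpNormEssSup_le_of_ae_enorm_bound ?_
    filter_upwards [ae_all_iff.2 fun i => ae_le_eLpNormEssSup (f := u i) (μ := ν)] with x hx
    exact iSup_le fun i => (hx i).trans (hc i)
  have hq' : 0 < q.toReal := ENNReal.toReal_pos hq hq_top
  simp only [eLpNorm_eq_lintegral_rpow_enorm_toReal hq hq_top, enorm_eq_self,
    one_div, ENNReal.rpow_inv_le_iff hq'] at hc ⊢
  have rpow_iSup (x : α) : (⨆ i, u i x) ^ q.toReal = ⨆ i, u i x ^ q.toReal :=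
    (ENNReal.orderIsoRpow q.toReal hq').map_iSup _
  simp only [rpow_iSup]
  have directed_rpow : Directed (· ≤ ·) fun i x => u i x ^ q.toReal :=
    hdir.mono_comp (g := fun v x => v x ^ q.toReal) (· ≤ ·)
      fun (v w : α → ℝ≥0∞) (hvw : v ≤ w) x => ENNReal.rpow_le_rpow (hvw x) hq'.le
  rw [lintegral_iSup_directed (fun i => (hu i).pow_const _) directed_rpow]
  exact iSup_le hc

lemma eLpNorm_tsum_le {u : ι → α → ℝ≥0∞} (hu : ∀ i, AEMeasurable (u i) ν)
    {q : ℝ≥0∞} (hq : 1 ≤ q) :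
    eLpNorm (fun x => ∑' i, u i x) q ν ≤ ∑' i, eLpNorm (u i) q ν := by
  have directed : Directed (· ≤ ·) fun (s : Finset ι) x => ∑ i ∈ s, u i x :=
    Monotone.directed_le fun s t hst x => Finset.sum_le_sum_of_subset hst
  simp only [ENNReal.tsum_eq_iSup_sum (f := fun i => u i _)]
  refine eLpNorm_iSup_le_of_directed (fun s => Finset.aemeasurable_fun_sum s fun i _ => hu i)
    directed fun s => ?_
  rw [show (fun x => ∑ i ∈ s, u i x) = ∑ i ∈ s, u i by ext; simp]
  exact (eLpNorm_sum_le (fun i _ => (hu i).aestronglyMeasurable) hq).trans (ENNReal.sum_le_tsum s)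

lemma eLpNorm_indicator_le_tsum {F : Type*} [NormedAddCommGroup F] {f : α → F}
    (hf : AEStronglyMeasurable f ν) {A : Set α} {s : ι → Set α}
    (hs : ∀ i, NullMeasurableSet (s i) ν)
    (hcover : ∀ᵐ x ∂ν, x ∈ A → f x ≠ 0 → ∃ i, x ∈ s i) {q : ℝ≥0∞} (hq : 1 ≤ q) :
    eLpNorm (A.indicator f) q ν ≤ ∑' i, eLpNorm ((s i).indicator f) q ν := by
  have enorm_le : ∀ᵐ x ∂ν, ‖A.indicator f x‖ₑ ≤ ∑' i, ‖(s i).indicator f x‖ₑ := by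
    filter_upwards [hcover] with x hx
    by_cases hA : x ∈ A; swap
    · simp [hA]
    by_cases hfx : f x = 0
    · simp [hA, hfx]
    obtain ⟨i, hi⟩ := hx hA hfx
    calc ‖A.indicator f x‖ₑ = ‖(s i).indicator f x‖ₑ := by
          rw [indicator_of_mem hA, indicator_of_mem hi]
      _ ≤ _ := ENNReal.le_tsum i
  calc eLpNorm (A.indicator f) q ν ≤ eLpNorm (fun x => ∑' i, ‖(s i).indicator f x‖ₑ) q ν :=
        eLpNorm_mono_enorm_ae (by simpa using enorm_le)
    _ ≤ ∑' i, eLpNorm (fun x => ‖(s i).indicator f x‖ₑ) q ν :=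
        eLpNorm_tsum_le (fun i => (hf.indicator₀ (hs i)).enorm) hq
    _ = ∑' i, eLpNorm ((s i).indicator f) q ν := by simp only [eLpNorm_enorm]

end CountableMinkowski

section DecreasingRearrangement

variable {α : Type*} [MeasurableSpace α] {ν : Measure α} {g h : α → ℝ≥0∞} {c s τ : ℝ≥0∞}

/-- The decreasing rearrangement `g*(τ) = inf {s | ν {g > s} ≤ τ}` of `g`. Both the argument `τ` and
the values range over `[0, ∞]`, so that `g*` is a generalised inverse of the distribution function
without finiteness assumptions. -/
def decreasingRearrangement (ν : Measure α) (g : α → ℝ≥0∞) (τ : ℝ≥0∞) : ℝ≥0∞ :=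
  sInf {s | ν {x | s < g x} ≤ τ}

lemma decreasingRearrangement_le (hs : ν {x | s < g x} ≤ τ) : decreasingRearrangement ν g τ ≤ s :=
  sInf_le hs

lemma measure_decreasingRearrangement_lt_le (τ : ℝ≥0∞) :
    ν {x | decreasingRearrangement ν g τ < g x} ≤ τ := by
  have nonempty : {s | ν {x | s < g x} ≤ τ}.Nonempty := ⟨∞, by simp⟩
  obtain ⟨u, u_anti, u_lim, u_mem⟩ := exists_seq_tendsto_sInf nonempty (OrderBot.bddBelow _)
  have union : {x | decreasingRearrangement ν g τ < g x} = ⋃ n, {x | u n < g x} := by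
    ext x
    simp only [mem_ofPred_eq, mem_iUnion]
    exact ⟨fun hx => (u_lim.eventually (gt_mem_nhds hx)).exists,
      fun ⟨n, hn⟩ => (sInf_le (u_mem n)).trans_lt hn⟩
  have monotone : Monotone fun n => {x | u n < g x} := fun m n hmn x hx => (u_anti hmn).trans_lt hx
  rw [union, monotone.measure_iUnion]
  exact iSup_le u_mem

lemma lt_decreasingRearrangement_iff :
    s < decreasingRearrangement ν g τ ↔ τ < ν {x | s < g x} := by
  rw [← not_le, ← not_le, not_iff_not]
  refine ⟨fun hs => ?_, decreasingRearrangement_le⟩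
  exact (measure_mono fun x hx => hs.trans_lt hx).trans (measure_decreasingRearrangement_lt_le τ)

lemma antitone_decreasingRearrangement : Antitone (decreasingRearrangement ν g) :=
  fun _ _ hτ => sInf_le_sInf fun _ hs => hs.trans hτ

@[fun_prop]
lemma measurable_decreasingRearrangement : Measurable (decreasingRearrangement ν g) :=
  antitone_decreasingRearrangement.measurable

lemma decreasingRearrangement_le_add (hgh : ∀ᵐ x ∂ν, g x ≤ c + h x) :
    decreasingRearrangement ν g τ ≤ c + decreasingRearrangement ν h τ := by
  refine decreasingRearrangement_le (le_trans (measure_mono_ae ?_)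
    (measure_decreasingRearrangement_lt_le (ν := ν) (g := h) τ))
  filter_upwards [hgh] with x hx hlt
  exact lt_of_add_lt_add_left (hlt.trans_le hx)

lemma rpow_mul_decreasingRearrangement_le_eLpNorm (hg : AEMeasurable g ν) {q : ℝ≥0∞} (hq : q ≠ 0)
    (hq_top : q ≠ ∞) :
    τ ^ q.toReal⁻¹ * decreasingRearrangement ν g τ ≤ eLpNorm g q ν := by
  have hq' : 0 < q.toReal := ENNReal.toReal_pos hq hq_top
  refine ENNReal.mul_le_of_forall_lt fun a ha s hs => ?_
  rw [← ENNReal.rpow_le_rpow_iff hq']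
  calc (a * s) ^ q.toReal ≤ (τ ^ q.toReal⁻¹ * s) ^ q.toReal := by gcongr
    _ = s ^ q.toReal * τ := by
      rw [ENNReal.mul_rpow_of_nonneg _ _ hq'.le, ENNReal.rpow_inv_rpow hq'.ne', mul_comm]
    _ ≤ s ^ q.toReal * ν {x | s ≤ ‖g x‖ₑ} := by
      gcongr
      exact (lt_decreasingRearrangement_iff.1 hs).le.trans
        (measure_mono fun x (hx : s < g x) => hx.le)
    _ ≤ eLpNorm g q ν ^ q.toReal :=
      mul_meas_ge_le_pow_eLpNorm' ν hq hq_top hg.aestronglyMeasurable s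

end DecreasingRearrangement

section LogMeasure

/-- The measure `dτ/τ` on `[0, ∞]`, encoded as the push-forward of Lebesgue measure under `exp`;
it carries the integrals that define Lorentz norms. -/
def logMeasure : Measure ℝ≥0∞ :=
  (volume : Measure ℝ).map fun x => ENNReal.ofReal (Real.exp x)

instance : SFinite logMeasure := by unfold logMeasure; infer_instance

lemma exists_ofReal_exp_eq {c : ℝ≥0∞} (hc : c ≠ 0) (hc_top : c ≠ ∞) :
    ∃ b, ENNReal.ofReal (Real.exp b) = c :=
  ⟨Real.log c.toReal, by
    rw [Real.exp_log (ENNReal.toReal_pos hc hc_top), ENNReal.ofReal_toReal hc_top]⟩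

lemma measurePreserving_mul_logMeasure {c : ℝ≥0∞} (hc : c ≠ 0) (hc_top : c ≠ ∞) :
    MeasurePreserving (· * c) logMeasure logMeasure := by
  obtain ⟨b, rfl⟩ := exists_ofReal_exp_eq hc hc_top
  refine ⟨by fun_prop, ?_⟩
  conv_rhs => rw [logMeasure, ← (measurePreserving_add_right volume b).map_eq]
  rw [logMeasure, Measure.map_map (by fun_prop) (by fun_prop),
    Measure.map_map (by fun_prop) (by fun_prop)]
  congr 1 with x
  simp only [Function.comp_apply, Real.exp_add, ENNReal.ofReal_mul (Real.exp_nonneg x)]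

lemma measurePreserving_mul_inv_logMeasure {c : ℝ≥0∞} (hc : c ≠ 0) (hc_top : c ≠ ∞) :
    MeasurePreserving (c * ·⁻¹) logMeasure logMeasure := by
  obtain ⟨b, rfl⟩ := exists_ofReal_exp_eq hc hc_top
  refine ⟨by fun_prop, ?_⟩
  conv_rhs => rw [logMeasure, ← (Measure.measurePreserving_sub_left volume b).map_eq]
  rw [logMeasure, Measure.map_map (by fun_prop) (by fun_prop),
    Measure.map_map (by fun_prop) (by fun_prop)]
  congr 1 with x
  simp only [Function.comp_apply, Real.exp_sub, ENNReal.ofReal_div_of_pos (Real.exp_pos x),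
    ENNReal.div_eq_inv_mul, mul_comm]

lemma ae_logMeasure_ne : ∀ᵐ τ ∂logMeasure, τ ≠ 0 ∧ τ ≠ ∞ := by
  rw [logMeasure, ae_map_iff (by fun_prop) (by measurability)]
  exact .of_forall fun x => by simp [Real.exp_pos]

lemma logMeasure_Ioo_ne_zero {a b : ℝ≥0∞} (hab : a < b) : logMeasure (Ioo a b) ≠ 0 := by
  obtain ⟨c, hac, hcb⟩ := exists_between hab
  obtain ⟨x, hx⟩ := exists_ofReal_exp_eq hac.ne_bot hcb.ne_top
  have continuous_ofReal_exp : Continuous fun x => ENNReal.ofReal (Real.exp x) :=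
    ENNReal.continuous_ofReal.comp Real.continuous_exp
  rw [logMeasure, Measure.map_apply continuous_ofReal_exp.measurable measurableSet_Ioo]
  exact (isOpen_Ioo.preimage continuous_ofReal_exp).measure_ne_zero volume
    ⟨x, by simpa [hx] using ⟨hac, hcb⟩⟩

lemma lintegral_logMeasure {h : ℝ≥0∞ → ℝ≥0∞} (hh : Measurable h) :
    ∫⁻ τ, h τ ∂logMeasure = ∫⁻ l in Ioi (0 : ℝ), h (ENNReal.ofReal l) / ENNReal.ofReal l := by
  rw [logMeasure, lintegral_map hh (by fun_prop), ← Real.range_exp, ← image_univ,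
    lintegral_image_eq_lintegral_abs_deriv_mul MeasurableSet.univ
      (fun x _ => (Real.hasDerivAt_exp x).hasDerivWithinAt) Real.exp_injective.injOn,
    Measure.restrict_univ]
  refine lintegral_congr fun x => ?_
  rw [Real.abs_exp, ENNReal.mul_div_cancel (by simpa using Real.exp_pos x) ENNReal.ofReal_ne_top]

lemma ofReal_mul_setLIntegral_Iio_rpow_logMeasure {a : ℝ} (ha : 0 < a) (M : ℝ≥0∞) :
    ENNReal.ofReal a * ∫⁻ τ in Iio M, τ ^ a ∂logMeasure = M ^ a := by
  have finite_case {N : ℝ≥0∞} (hN : N ≠ ∞) :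
      ENNReal.ofReal a * ∫⁻ τ in Iio N, τ ^ a ∂logMeasure = N ^ a := by
    rcases eq_or_ne N 0 with rfl | hN0
    · simp [ENNReal.zero_rpow_of_pos ha]
    obtain ⟨b, rfl⟩ := exists_ofReal_exp_eq hN0 hN
    have preimage : (fun x => ENNReal.ofReal (Real.exp x)) ⁻¹' Iio (ENNReal.ofReal (Real.exp b)) =
        Iio b := by
      ext x; simp [ENNReal.ofReal_lt_ofReal_iff, Real.exp_pos]
    rw [logMeasure, setLIntegral_map measurableSet_Iio (by fun_prop) (by fun_prop), preimage]
    simp only [ENNReal.ofReal_rpow_of_pos (Real.exp_pos _), ← Real.exp_mul, mul_comm _ a]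
    rw [setLIntegral_congr Iio_ae_eq_Iic,
      ← ofReal_integral_eq_lintegral_ofReal (integrableOn_exp_mul_Iic ha b)
        (.of_forall fun x => Real.exp_nonneg _),
      integral_exp_mul_Iic ha, ← ENNReal.ofReal_mul ha.le, mul_div_cancel₀ _ ha.ne']
  rcases eq_or_ne M ∞ with rfl | hM
  · rw [ENNReal.top_rpow_of_pos ha]
    refine ENNReal.eq_top_of_forall_nnreal_le fun m => ?_
    calc (m : ℝ≥0∞) = ((m : ℝ≥0∞) ^ a⁻¹) ^ a := (ENNReal.rpow_inv_rpow ha.ne' _).symm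
      _ = _ := (finite_case (ENNReal.rpow_ne_top_of_nonneg (by positivity) (by simp))).symm
      _ ≤ _ := by gcongr; exact le_top
  · exact finite_case hM

end LogMeasure

section LorentzProfile

variable {α : Type*} [MeasurableSpace α] {ν : Measure α} {g : α → ℝ≥0∞} {p q : ℝ} {θ : ℝ≥0∞}

/-- The function `τ ↦ τ^{1/p} g*(τ)`, whose `L^θ(dτ/τ)` norm is the Lorentz quasinorm
`‖g‖_{L^{p,θ}}`. -/
def lorentzProfile (ν : Measure α) (p : ℝ) (g : α → ℝ≥0∞) (τ : ℝ≥0∞) : ℝ≥0∞ :=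
  τ ^ p⁻¹ * decreasingRearrangement ν g τ

@[fun_prop]
lemma measurable_lorentzProfile : Measurable (lorentzProfile ν p g) := by
  unfold lorentzProfile; fun_prop

lemma measurable_measure_lt : Measurable fun s => ν {x | s < g x} :=
  Antitone.measurable fun _ _ hst => measure_mono fun _ hx => hst.trans_lt hx

lemma lintegral_lorentzProfile_rpow (hp : 0 < p) (hq : 0 < q) :
    ∫⁻ τ, lorentzProfile ν p g τ ^ q ∂logMeasure =
      ENNReal.ofReal p * ∫⁻ s, (s * ν {x | s < g x} ^ p⁻¹) ^ q ∂logMeasure := by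
  let A : Set (ℝ≥0∞ × ℝ≥0∞) := {z | z.2 < ν {x | z.1 < g x}}
  let k (z : ℝ≥0∞ × ℝ≥0∞) : ℝ≥0∞ := A.indicator (fun z => z.1 ^ q * z.2 ^ (q / p)) z
  have measurable_k : Measurable k := by
    have hA : MeasurableSet A :=
      measurableSet_lt measurable_snd (measurable_measure_lt.comp measurable_fst)
    exact Measurable.indicator (by fun_prop) hA
  have distribution_side (s : ℝ≥0∞) : (s * ν {x | s < g x} ^ p⁻¹) ^ q =
      ENNReal.ofReal (q / p) * ∫⁻ τ, k (s, τ) ∂logMeasure := by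
    rw [ENNReal.mul_rpow_of_nonneg _ _ hq.le, ← ENNReal.rpow_mul, inv_mul_eq_div,
      ← ofReal_mul_setLIntegral_Iio_rpow_logMeasure (div_pos hq hp), mul_left_comm,
      ← lintegral_indicator measurableSet_Iio, ← lintegral_const_mul _ (by measurability)]
    simp [k, A, indicator]
  have rearrangement_side (τ : ℝ≥0∞) : lorentzProfile ν p g τ ^ q =
      ENNReal.ofReal q * ∫⁻ s, k (s, τ) ∂logMeasure := by
    rw [lorentzProfile, ENNReal.mul_rpow_of_nonneg _ _ hq.le, ← ENNReal.rpow_mul, inv_mul_eq_div,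
      ← ofReal_mul_setLIntegral_Iio_rpow_logMeasure hq, mul_left_comm,
      ← lintegral_indicator measurableSet_Iio, ← lintegral_const_mul _ (by measurability)]
    simp [k, A, indicator, lt_decreasingRearrangement_iff, mul_comm]
  simp only [distribution_side, rearrangement_side]
  rw [lintegral_const_mul _ (by fun_prop), lintegral_const_mul _ (by fun_prop),
    lintegral_lintegral_swap (by fun_prop), ← mul_assoc, ← ENNReal.ofReal_mul hp.le,
    mul_div_cancel₀ _ hp.ne']

lemma essSup_lorentzProfile (hp : 0 < p) :
    eLpNormEssSup (lorentzProfile ν p g) logMeasure =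
      ⨆ l ∈ Ioi (0 : ℝ), ENNReal.ofReal l * ν {x | ENNReal.ofReal l < g x} ^ p⁻¹ := by
  refine le_antisymm (eLpNormEssSup_le_of_ae_enorm_bound <| .of_forall fun τ => ?_)
    (iSup₂_le fun l hl => ?_)
  · refine ENNReal.mul_le_of_forall_lt fun a ha s hs => ?_
    rcases eq_or_ne s 0 with rfl | hs0
    · simp
    have hs' : 0 < s.toReal := ENNReal.toReal_pos hs0 hs.ne_top
    refine le_trans ?_ (le_iSup₂ s.toReal hs')
    rw [ENNReal.ofReal_toReal hs.ne_top, mul_comm]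
    gcongr
    exact ha.le.trans (by gcongr; exact (lt_decreasingRearrangement_iff.1 hs).le)
  · rw [mul_comm]
    refine ENNReal.mul_le_of_forall_lt fun a ha s hs => ?_
    have ha' : a ^ p < ν {x | ENNReal.ofReal l < g x} := by
      rwa [← ENNReal.lt_rpow_inv_iff hp]
    obtain ⟨τ, ⟨haτ, hτ⟩, hτ_le⟩ := ((frequently_ae_mem_iff.2
      (logMeasure_Ioo_ne_zero ha')).and_eventually
        (enorm_ae_le_eLpNormEssSup (lorentzProfile ν p g) logMeasure)).exists
    calc a * s ≤ τ ^ p⁻¹ * decreasingRearrangement ν g τ := by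
          gcongr
          · exact (ENNReal.le_rpow_inv_iff hp).2 haτ.le
          · exact (hs.trans (lt_decreasingRearrangement_iff.2 hτ)).le
      _ ≤ _ := hτ_le

lemma lorentzNorm_eq_eLpNorm_lorentzProfile (hp : 0 < p) (hθ : θ ≠ 0) :
    lorentzNorm ν (ENNReal.ofReal p) θ g = eLpNorm (lorentzProfile ν p g) θ logMeasure := by
  rw [lorentzNorm, ENNReal.toReal_inv, ENNReal.toReal_ofReal hp.le]
  split_ifs with hθ_top
  · rw [hθ_top, eLpNorm_exponent_top, essSup_lorentzProfile hp]
  · have hq : 0 < θ.toReal := ENNReal.toReal_pos hθ hθ_top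
    have measurable_integrand : Measurable fun s => (s * ν {x | s < g x} ^ p⁻¹) ^ θ.toReal :=
      (measurable_id.mul (measurable_measure_lt.pow_const _)).pow_const _
    simp only [eLpNorm_eq_lintegral_rpow_enorm_toReal hθ hθ_top, enorm_eq_self,
      lintegral_lorentzProfile_rpow hp hq, lintegral_logMeasure measurable_integrand,
      ENNReal.toReal_inv, one_div]

lemma lorentzNorm_zero (hp : 0 < p) (hθ : θ ≠ 0) :
    lorentzNorm ν (ENNReal.ofReal p) θ (fun _ => 0) = 0 := by
  have rearrangement_zero (τ : ℝ≥0∞) : decreasingRearrangement ν (fun _ => 0) τ = 0 :=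
    le_zero_iff.1 (decreasingRearrangement_le (by simp))
  have profile_zero : lorentzProfile ν p (fun _ => 0) = 0 := by
    ext τ; simp [lorentzProfile, rearrangement_zero]
  rw [lorentzNorm_eq_eLpNorm_lorentzProfile hp hθ, profile_zero, eLpNorm_zero]

end LorentzProfile

section PeakSet

variable {α F : Type*} [MeasurableSpace α] [NormedAddCommGroup F] {ν : Measure α} {f : α → F}
  {q τ τ' : ℝ≥0∞}

/-- The set `{|f| > f*(τ)}` on which `f` takes its largest values; its measure is at most `τ`.
It cuts `f` into the two pieces to which the endpoint bounds are applied. -/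
def peakSet (ν : Measure α) (f : α → F) (τ : ℝ≥0∞) : Set α :=
  {x | decreasingRearrangement ν (fun y => ‖f y‖ₑ) τ < ‖f x‖ₑ}

lemma measure_peakSet_le (τ : ℝ≥0∞) : ν (peakSet ν f τ) ≤ τ :=
  measure_decreasingRearrangement_lt_le τ

lemma nullMeasurableSet_peakSet (hf : AEStronglyMeasurable f ν) :
    NullMeasurableSet (peakSet ν f τ) ν :=
  nullMeasurableSet_lt aemeasurable_const hf.enorm

lemma eLpNorm_indicator_peakSet_diff_le :
    eLpNorm ((peakSet ν f τ \ peakSet ν f τ').indicator f) q ν ≤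
      decreasingRearrangement ν (fun x => ‖f x‖ₑ) τ' * τ ^ q.toReal⁻¹ := by
  set h := decreasingRearrangement ν (fun x => ‖f x‖ₑ) τ'
  have enorm_le (x : α) : ‖(peakSet ν f τ \ peakSet ν f τ').indicator f x‖ₑ ≤
      ‖(peakSet ν f τ).indicator (fun _ => h) x‖ₑ := by
    by_cases hx : x ∈ peakSet ν f τ \ peakSet ν f τ'
    · simpa [hx, hx.1] using not_lt.1 hx.2
    · simp [hx]
  calc _ ≤ eLpNorm ((peakSet ν f τ).indicator fun _ => h) q ν := eLpNorm_mono_enorm enorm_le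
    _ ≤ ‖h‖ₑ * ν (peakSet ν f τ) ^ (1 / q.toReal) := eLpNorm_indicator_const_le _ _
    _ ≤ h * τ ^ q.toReal⁻¹ := by
      rw [one_div, enorm_eq_self]
      gcongr
      exact measure_peakSet_le τ

lemma ae_exists_notMem_peakSet {u : ℕ → ℝ≥0∞} (hu : Filter.Tendsto u .atTop (nhds 0)) :
    ∀ᵐ x ∂ν, ∃ j, x ∉ peakSet ν f (u j) := by
  rw [ae_iff, ← le_zero_iff]
  refine ge_of_tendsto' hu fun j => ?_
  calc ν {x | ¬∃ j, x ∉ peakSet ν f (u j)} ≤ ν (peakSet ν f (u j)) :=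
        measure_mono fun x hx => by simp_all
    _ ≤ u j := measure_peakSet_le (u j)

lemma exists_mem_peakSet {u : ℕ → ℝ≥0∞} (hu : Filter.Tendsto u .atTop (nhds ∞))
    (hf : ∀ s ≠ 0, ν {x | s < ‖f x‖ₑ} ≠ ∞) {x : α} (hx : f x ≠ 0) :
    ∃ j, x ∈ peakSet ν f (u j) := by
  obtain ⟨s, hs0, hs⟩ := exists_between (enorm_pos.2 hx)
  obtain ⟨j, hj⟩ := (hu.eventually (lt_mem_nhds (hf s hs0.ne').lt_top)).exists
  exact ⟨j, (decreasingRearrangement_le hj.le).trans_lt hs⟩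

lemma eLpNorm_indicator_peakSet_le (hf : AEStronglyMeasurable f ν) (hτ : τ ≠ ∞) (hq : 1 ≤ q) :
    eLpNorm ((peakSet ν f τ).indicator f) q ν ≤
      ∑' j : ℕ, decreasingRearrangement ν (fun x => ‖f x‖ₑ) (τ * 2⁻¹ ^ (j + 1)) *
        (τ * 2⁻¹ ^ j) ^ q.toReal⁻¹ := by
  have tendsto_zero : Filter.Tendsto (fun j => τ * (2⁻¹ : ℝ≥0∞) ^ j) .atTop (nhds 0) := by
    simpa using ENNReal.Tendsto.const_mul
      (ENNReal.tendsto_pow_atTop_nhds_zero_of_lt_one (r := 2⁻¹) (by simp)) (.inr hτ)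
  refine (eLpNorm_indicator_le_tsum hf (s := fun j : ℕ =>
    peakSet ν f (τ * 2⁻¹ ^ j) \ peakSet ν f (τ * 2⁻¹ ^ (j + 1)))
    (fun j => (nullMeasurableSet_peakSet hf).diff (nullMeasurableSet_peakSet hf)) ?_ hq).trans
    (ENNReal.tsum_le_tsum fun j => eLpNorm_indicator_peakSet_diff_le)
  filter_upwards [ae_exists_notMem_peakSet (f := f) tendsto_zero] with x hx hxτ _
  obtain ⟨j, hj, hj'⟩ := Nat.exists_not_and_succ_of_not_zero_of_exists (by simpa using hxτ) hx
  exact ⟨j, not_not.1 hj, hj'⟩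

lemma eLpNorm_indicator_compl_peakSet_le (hf : AEStronglyMeasurable f ν)
    (hf_level : ∀ s ≠ 0, ν {x | s < ‖f x‖ₑ} ≠ ∞) (hτ : τ ≠ 0) (hq : 1 ≤ q) :
    eLpNorm ((peakSet ν f τ)ᶜ.indicator f) q ν ≤
      ∑' j : ℕ, decreasingRearrangement ν (fun x => ‖f x‖ₑ) (τ * 2 ^ j) *
        (τ * 2 ^ (j + 1)) ^ q.toReal⁻¹ := by
  have tendsto_top : Filter.Tendsto (fun j => τ * (2 : ℝ≥0∞) ^ j) .atTop (nhds ∞) := by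
    simpa [ENNReal.mul_top hτ] using ENNReal.Tendsto.const_mul (a := τ)
      (ENNReal.tendsto_pow_atTop_nhds_top_iff.2 ENNReal.one_lt_two) (.inl (by simp))
  refine (eLpNorm_indicator_le_tsum hf (s := fun j : ℕ =>
    peakSet ν f (τ * 2 ^ (j + 1)) \ peakSet ν f (τ * 2 ^ j))
    (fun j => (nullMeasurableSet_peakSet hf).diff (nullMeasurableSet_peakSet hf)) ?_ hq).trans
    (ENNReal.tsum_le_tsum fun j => eLpNorm_indicator_peakSet_diff_le)
  filter_upwards with x hxτ hfx
  obtain ⟨j, hj, hj'⟩ := Nat.exists_not_and_succ_of_not_zero_of_exists (by simpa using hxτ)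
    (exists_mem_peakSet tendsto_top hf_level hfx)
  exact ⟨j, hj', hj⟩

end PeakSet

section Dilation

lemma eLpNorm_tsum_mul_dilation_le {ι : Type*} [Countable ι] {G : ℝ≥0∞ → ℝ≥0∞}
    (hG : Measurable G) (w : ι → ℝ≥0∞) {c : ι → ℝ≥0∞} (hc : ∀ i, c i ≠ 0 ∧ c i ≠ ∞) {θ : ℝ≥0∞}
    (hθ : 1 ≤ θ) :
    eLpNorm (fun τ => ∑' i, w i * G (τ * c i)) θ logMeasure ≤
      (∑' i, w i) * eLpNorm G θ logMeasure := by
  have dilation_invariant (i : ι) : eLpNorm (fun τ => w i * G (τ * c i)) θ logMeasure ≤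
      w i * eLpNorm G θ logMeasure := by
    rw [← eLpNorm_comp_measurePreserving hG.aestronglyMeasurable
      (measurePreserving_mul_logMeasure (hc i).1 (hc i).2)]
    exact eLpNorm_le_mul_eLpNorm_of_ae_le_mul'' _
      (hG.comp (measurable_id.mul_const _)).aestronglyMeasurable (.of_forall fun τ => by simp)
  calc _ ≤ ∑' i, eLpNorm (fun τ => w i * G (τ * c i)) θ logMeasure :=
        eLpNorm_tsum_le (fun i => by fun_prop) hθ
    _ ≤ ∑' i, w i * eLpNorm G θ logMeasure := ENNReal.tsum_le_tsum dilation_invariant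
    _ = (∑' i, w i) * eLpNorm G θ logMeasure := ENNReal.tsum_mul_right

end Dilation

section Interpolation

variable {α β F G : Type*} [MeasurableSpace α] [MeasurableSpace β] [NormedAddCommGroup F]
  [NormedAddCommGroup G] {μ : Measure α} {ν : Measure β} {T : (α → F) → β → G} {A B : ℝ≥0∞}
  {f g : α → F} {p r : ℝ} {θ τ σ : ℝ≥0∞}

/-- A sublinear operator `T`, defined on integrable functions, is bounded from `L¹` to `L^∞` with
constant `A` and from `L²` to `L²` with constant `B`. These are the endpoints between which the
dispersive estimate is interpolated. -/
structure HasEndpointBounds (T : (α → F) → β → G) (A B : ℝ≥0∞) (μ : Measure α)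
    (ν : Measure β) : Prop where
  aestronglyMeasurable : ∀ {f}, Integrable f μ → AEStronglyMeasurable (T f) ν
  enorm_add_le : ∀ {f g}, Integrable f μ → Integrable g μ →
    ∀ᵐ x ∂ν, ‖T (f + g) x‖ₑ ≤ ‖T f x‖ₑ + ‖T g x‖ₑ
  eLpNorm_top_le : ∀ {f}, Integrable f μ → eLpNorm (T f) ∞ ν ≤ A * eLpNorm f 1 μ
  eLpNorm_two_le : ∀ {f}, Integrable f μ → eLpNorm (T f) 2 ν ≤ B * eLpNorm f 2 μ

lemma HasEndpointBounds.decreasingRearrangement_add_le (hT : HasEndpointBounds T A B μ ν)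
    (hf : Integrable f μ) (hg : Integrable g μ) (hσ : σ ≠ 0) (hσ_top : σ ≠ ∞) :
    decreasingRearrangement ν (fun x => ‖T (f + g) x‖ₑ) σ ≤
      A * eLpNorm f 1 μ + σ⁻¹ ^ (2⁻¹ : ℝ) * (B * eLpNorm g 2 μ) := by
  have enorm_le : ∀ᵐ x ∂ν, ‖T (f + g) x‖ₑ ≤ A * eLpNorm f 1 μ + ‖T g x‖ₑ := by
    filter_upwards [hT.enorm_add_le hf hg, ae_le_eLpNormEssSup (f := T f)] with x hx hfx
    exact hx.trans (by gcongr; exact hfx.trans (hT.eLpNorm_top_le hf))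
  have weak_type : σ ^ (2⁻¹ : ℝ) * decreasingRearrangement ν (fun x => ‖T g x‖ₑ) σ ≤
      B * eLpNorm g 2 μ := by
    have := rpow_mul_decreasingRearrangement_le_eLpNorm (τ := σ)
      (hT.aestronglyMeasurable hg).enorm two_ne_zero ENNReal.ofNat_ne_top
    rw [eLpNorm_enorm] at this
    exact this.trans (hT.eLpNorm_two_le hg)
  refine (decreasingRearrangement_le_add enorm_le).trans ?_
  gcongr
  rwa [ENNReal.inv_rpow, ← ENNReal.mul_le_iff_le_inv (by simp [hσ]) (by simp [hσ_top])]

lemma HasEndpointBounds.decreasingRearrangement_le (hT : HasEndpointBounds T A B μ ν)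
    (hA : A ≠ 0) (hA_top : A ≠ ∞) (hB : B ≠ 0) (hB_top : B ≠ ∞) (hf : Integrable f μ)
    (hτ : τ ≠ 0) (hτ_top : τ ≠ ∞) :
    decreasingRearrangement ν (fun x => ‖T f x‖ₑ) ((B / A) ^ 2 * τ⁻¹) ≤
      A * (eLpNorm ((peakSet μ f τ).indicator f) 1 μ +
        τ ^ (2⁻¹ : ℝ) * eLpNorm ((peakSet μ f τ)ᶜ.indicator f) 2 μ) := by
  have null_measurable := nullMeasurableSet_peakSet (τ := τ) hf.aestronglyMeasurable
  have balance : ((B / A) ^ 2 * τ⁻¹)⁻¹ ^ (2⁻¹ : ℝ) * B = A * τ ^ (2⁻¹ : ℝ) := by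
    rw [ENNReal.mul_inv (by simp [hτ]) (by simp [hτ_top]), inv_inv, ENNReal.inv_pow,
      ENNReal.inv_div (.inl hA_top) (.inl hA), ENNReal.mul_rpow_of_nonneg _ _ (by norm_num),
      ← ENNReal.rpow_natCast_mul, mul_right_comm]
    simp [ENNReal.div_mul_cancel hB hB_top]
  conv_lhs => rw [← indicator_self_add_compl (peakSet μ f τ) f]
  refine (hT.decreasingRearrangement_add_le (hf.indicator₀ null_measurable)
    (hf.indicator₀ null_measurable.compl) ?_ ?_).trans_eq ?_
  · simp [hτ_top, hB, hA_top]
  · finiteness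
  · rw [← mul_assoc, balance, mul_add, mul_assoc]

lemma inv_rpow_mul_rpow_mul_two {c : ℝ≥0∞} (hτ : τ ≠ 0) (hτ_top : τ ≠ ∞) (hc : c ≠ 0)
    (hc_top : c ≠ ∞) (a b : ℝ) :
    τ⁻¹ ^ a * (τ * c * 2) ^ b = 2 ^ b * c ^ a * (τ * c) ^ (b - a) := by
  have c_ne : τ * c ≠ 0 := mul_ne_zero hτ hc
  have cancel : c ^ a * (τ * c) ^ (-a) = τ⁻¹ ^ a := by
    rw [ENNReal.mul_rpow_of_ne_zero hτ hc, mul_left_comm, ← ENNReal.rpow_add _ _ hc hc_top,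
      ENNReal.rpow_neg, ENNReal.inv_rpow]
    simp
  rw [← cancel, ENNReal.mul_rpow_of_ne_zero c_ne two_ne_zero, sub_eq_neg_add,
    ENNReal.rpow_add _ _ c_ne (by finiteness)]
  ring

lemma inv_rpow_mul_eLpNorm_indicator_peakSet_le (hf : AEStronglyMeasurable f μ) (hτ : τ ≠ 0)
    (hτ_top : τ ≠ ∞) (hpr : p⁻¹ + r⁻¹ = 1) :
    τ⁻¹ ^ r⁻¹ * eLpNorm ((peakSet μ f τ).indicator f) 1 μ ≤
      ∑' j : ℕ, 2 * (2⁻¹ ^ (j + 1)) ^ r⁻¹ *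
        lorentzProfile μ p (fun x => ‖f x‖ₑ) (τ * 2⁻¹ ^ (j + 1)) := by
  refine (mul_le_mul_right (eLpNorm_indicator_peakSet_le hf hτ_top le_rfl) _).trans_eq ?_
  rw [← ENNReal.tsum_mul_left]
  refine tsum_congr fun j => ?_
  have double : τ * (2⁻¹ : ℝ≥0∞) ^ j = τ * 2⁻¹ ^ (j + 1) * 2 := by
    rw [mul_assoc, pow_succ, mul_assoc, ENNReal.inv_mul_cancel two_ne_zero (by simp), mul_one]
  have := inv_rpow_mul_rpow_mul_two (c := 2⁻¹ ^ (j + 1)) hτ hτ_top (by simp) (by simp) r⁻¹ 1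
  rw [ENNReal.toReal_one, inv_one, mul_left_comm, double, this, lorentzProfile,
    eq_sub_of_add_eq hpr, ENNReal.rpow_one]
  ring

lemma inv_rpow_mul_eLpNorm_indicator_compl_peakSet_le (hf : Integrable f μ) (hτ : τ ≠ 0)
    (hτ_top : τ ≠ ∞) (hpr : p⁻¹ + r⁻¹ = 1) :
    τ⁻¹ ^ r⁻¹ * (τ ^ (2⁻¹ : ℝ) * eLpNorm ((peakSet μ f τ)ᶜ.indicator f) 2 μ) ≤
      ∑' j : ℕ, 2 ^ (2⁻¹ : ℝ) * (2 ^ j) ^ (r⁻¹ - 2⁻¹) *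
        lorentzProfile μ p (fun x => ‖f x‖ₑ) (τ * 2 ^ j) := by
  have merge : τ⁻¹ ^ r⁻¹ * τ ^ (2⁻¹ : ℝ) = τ⁻¹ ^ (r⁻¹ - 2⁻¹) := by
    rw [sub_eq_add_neg, ENNReal.rpow_add _ _ (by simpa) (by simpa), ENNReal.rpow_neg,
      ENNReal.inv_rpow, ENNReal.inv_rpow, inv_inv]
  rw [← mul_assoc, merge]
  refine (mul_le_mul_right (eLpNorm_indicator_compl_peakSet_le hf.aestronglyMeasurable
    (fun s hs => (hf.measure_norm_gt_lt_top_enorm hs.bot_lt).ne) hτ one_le_two) _).trans_eq ?_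
  rw [← ENNReal.tsum_mul_left]
  refine tsum_congr fun j => ?_
  have := inv_rpow_mul_rpow_mul_two (c := 2 ^ j) hτ hτ_top (by simp) (by simp) (r⁻¹ - 2⁻¹) 2⁻¹
  rw [ENNReal.toReal_ofNat, pow_succ, ← mul_assoc τ, mul_left_comm, this, lorentzProfile,
    show (2⁻¹ : ℝ) - (r⁻¹ - 2⁻¹) = p⁻¹ by linarith]
  ring

/-- The constant of the interpolation estimate into `L^{r,θ}`: the sum of the weights with which
the dyadic pieces of `f` inside and outside a peak set contribute to `T f`. -/
def interpConst (r : ℝ) : ℝ≥0∞ :=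
  ∑' j : ℕ, 2 * (2⁻¹ ^ (j + 1)) ^ r⁻¹ + ∑' j : ℕ, 2 ^ (2⁻¹ : ℝ) * (2 ^ j) ^ (r⁻¹ - 2⁻¹)

lemma interpConst_ne_zero (r : ℝ) : interpConst r ≠ 0 := by
  simp [interpConst, ENNReal.tsum_eq_zero]

lemma interpConst_ne_top (hr : 2 < r) : interpConst r ≠ ∞ := by
  have near_lt_one : (2⁻¹ : ℝ≥0∞) ^ r⁻¹ < 1 :=
    ENNReal.rpow_lt_one (by simp) (by positivity)
  have far_lt_one : (2 : ℝ≥0∞) ^ (r⁻¹ - 2⁻¹) < 1 :=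
    ENNReal.rpow_lt_one_of_one_lt_of_neg ENNReal.one_lt_two
      (sub_neg.2 (inv_strictAnti₀ two_pos hr))
  have pow_rpow (x : ℝ≥0∞) (n : ℕ) (s : ℝ) : (x ^ n) ^ s = (x ^ s) ^ n := by
    rw [← ENNReal.rpow_natCast_mul, mul_comm, ENNReal.rpow_mul_natCast]
  simp only [interpConst, ENNReal.tsum_mul_left, pow_rpow, ENNReal.tsum_geometric_add_one,
    ENNReal.tsum_geometric]
  have := tsub_pos_of_lt near_lt_one
  have := tsub_pos_of_lt far_lt_one
  finiteness

lemma HasEndpointBounds.lorentzProfile_le (hT : HasEndpointBounds T A B μ ν)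
    (hA : A ≠ 0) (hA_top : A ≠ ∞) (hB : B ≠ 0) (hB_top : B ≠ ∞) (hf : Integrable f μ)
    (hr : 0 < r) (hpr : p⁻¹ + r⁻¹ = 1) (hτ : τ ≠ 0) (hτ_top : τ ≠ ∞) :
    lorentzProfile ν r (fun x => ‖T f x‖ₑ) ((B / A) ^ 2 * τ⁻¹) ≤ A ^ (1 - 2 / r) * B ^ (2 / r) *
      (∑' j : ℕ, 2 * (2⁻¹ ^ (j + 1)) ^ r⁻¹ *
          lorentzProfile μ p (fun x => ‖f x‖ₑ) (τ * 2⁻¹ ^ (j + 1)) +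
        ∑' j : ℕ, 2 ^ (2⁻¹ : ℝ) * (2 ^ j) ^ (r⁻¹ - 2⁻¹) *
          lorentzProfile μ p (fun x => ‖f x‖ₑ) (τ * 2 ^ j)) := by
  have constant : ((B / A) ^ 2) ^ r⁻¹ * A = A ^ (1 - 2 / r) * B ^ (2 / r) := by
    rw [← ENNReal.rpow_natCast_mul, Nat.cast_ofNat, ← div_eq_mul_inv,
      ENNReal.div_rpow_of_nonneg _ _ (by positivity), ENNReal.rpow_sub _ _ hA hA_top,
      ENNReal.rpow_one, div_eq_mul_inv (B ^ _), div_eq_mul_inv A]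
    ring
  calc _ ≤ ((B / A) ^ 2 * τ⁻¹) ^ r⁻¹ * (A * (eLpNorm ((peakSet μ f τ).indicator f) 1 μ +
          τ ^ (2⁻¹ : ℝ) * eLpNorm ((peakSet μ f τ)ᶜ.indicator f) 2 μ)) :=
        mul_le_mul_right
          (hT.decreasingRearrangement_le hA hA_top hB hB_top hf hτ hτ_top) _
    _ = A ^ (1 - 2 / r) * B ^ (2 / r) *
          (τ⁻¹ ^ r⁻¹ * eLpNorm ((peakSet μ f τ).indicator f) 1 μ +
            τ⁻¹ ^ r⁻¹ * (τ ^ (2⁻¹ : ℝ) * eLpNorm ((peakSet μ f τ)ᶜ.indicator f) 2 μ)) := by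
        rw [ENNReal.mul_rpow_of_nonneg _ _ (by positivity), ← constant]
        ring
    _ ≤ _ := by
        gcongr
        · exact inv_rpow_mul_eLpNorm_indicator_peakSet_le hf.aestronglyMeasurable hτ hτ_top hpr
        · exact inv_rpow_mul_eLpNorm_indicator_compl_peakSet_le hf hτ hτ_top hpr

theorem HasEndpointBounds.lorentzNorm_le (hT : HasEndpointBounds T A B μ ν)
    (hA : A ≠ 0) (hA_top : A ≠ ∞) (hB : B ≠ 0) (hB_top : B ≠ ∞) (hf : Integrable f μ)
    (hpr : p.HolderConjugate r) (hθ : 1 ≤ θ) :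
    lorentzNorm ν (ENNReal.ofReal r) θ (fun x => ‖T f x‖ₑ) ≤
      A ^ (1 - 2 / r) * B ^ (2 / r) * interpConst r *
        lorentzNorm μ (ENNReal.ofReal p) θ (fun x => ‖f x‖ₑ) := by
  have hθ0 : θ ≠ 0 := (zero_lt_one.trans_le hθ).ne'
  set R := lorentzProfile ν r fun x => ‖T f x‖ₑ
  set P := lorentzProfile μ p fun x => ‖f x‖ₑ
  have measurable_P : Measurable P := measurable_lorentzProfile
  let near (τ : ℝ≥0∞) := ∑' j : ℕ, 2 * (2⁻¹ ^ (j + 1)) ^ r⁻¹ * P (τ * 2⁻¹ ^ (j + 1))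
  let far (τ : ℝ≥0∞) := ∑' j : ℕ, 2 ^ (2⁻¹ : ℝ) * (2 ^ j) ^ (r⁻¹ - 2⁻¹) * P (τ * 2 ^ j)
  have pointwise : ∀ᵐ τ ∂logMeasure, ‖R ((B / A) ^ 2 * τ⁻¹)‖ₑ ≤
      A ^ (1 - 2 / r) * B ^ (2 / r) * ‖near τ + far τ‖ₑ := by
    filter_upwards [ae_logMeasure_ne] with τ hτ
    exact hT.lorentzProfile_le hA hA_top hB hB_top hf hpr.symm.pos hpr.inv_add_inv_eq_one
      hτ.1 hτ.2
  have near_le := eLpNorm_tsum_mul_dilation_le measurable_P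
    (fun j : ℕ => 2 * (2⁻¹ ^ (j + 1)) ^ r⁻¹) (c := fun j => 2⁻¹ ^ (j + 1)) (by simp) hθ
  have far_le := eLpNorm_tsum_mul_dilation_le measurable_P
    (fun j : ℕ => 2 ^ (2⁻¹ : ℝ) * (2 ^ j) ^ (r⁻¹ - 2⁻¹)) (c := fun j => 2 ^ j) (by simp) hθ
  rw [lorentzNorm_eq_eLpNorm_lorentzProfile hpr.symm.pos hθ0,
    lorentzNorm_eq_eLpNorm_lorentzProfile hpr.pos hθ0]
  calc eLpNorm R θ logMeasure = eLpNorm (fun τ => R ((B / A) ^ 2 * τ⁻¹)) θ logMeasure :=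
        (eLpNorm_comp_measurePreserving measurable_lorentzProfile.aestronglyMeasurable
          (measurePreserving_mul_inv_logMeasure (by simp [hB, hA_top]) (by finiteness))).symm
    _ ≤ A ^ (1 - 2 / r) * B ^ (2 / r) * eLpNorm (near + far) θ logMeasure :=
        eLpNorm_le_mul_eLpNorm_of_ae_le_mul'' _ (by fun_prop) pointwise
    _ ≤ A ^ (1 - 2 / r) * B ^ (2 / r) * (eLpNorm near θ logMeasure + eLpNorm far θ logMeasure) := by
        gcongr
        exact eLpNorm_add_le (by fun_prop) (by fun_prop) hθ
    _ ≤ A ^ (1 - 2 / r) * B ^ (2 / r) * (interpConst r * eLpNorm P θ logMeasure) := by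
        rw [interpConst, add_mul]
        gcongr
    _ = _ := (mul_assoc _ _ _).symm

end Interpolation

section Plancherel

variable {E : Type*} [NormedAddCommGroup E] [InnerProductSpace ℝ E] [FiniteDimensional ℝ E]
  [MeasurableSpace E] [BorelSpace E] {f : E → ℂ}

open FourierTransform SchwartzMap

lemma continuous_fourier_of_integrable (hf : Integrable f) : Continuous (𝓕 f) :=
  VectorFourier.fourierIntegral_continuous Real.continuous_fourierChar (by exact continuous_inner)
    hf

lemma integral_fourier_smul_eq_integral_smul_fourier {g : E → ℂ} (hf : Integrable f)
    (hg : Integrable g) : ∫ x, 𝓕 f x • g x = ∫ x, f x • 𝓕 g x := by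
  have := VectorFourier.integral_fourierIntegral_smul_eq_flip (L := innerₗ E)
    Real.continuous_fourierChar (by exact continuous_inner) hf hg (μ := volume) (ν := volume)
  rwa [flip_innerₗ] at this

lemma fourier_toLp_ae_eq (hf : Integrable f) (hf2 : MemLp f 2) :
    (𝓕 (hf2.toLp f) : Lp ℂ 2 (volume : Measure E)) =ᵐ[volume] 𝓕 f := by
  refine ae_eq_of_integral_contDiff_smul_eq ((Lp.memLp _).locallyIntegrable (by norm_num))
    (continuous_fourier_of_integrable hf).locallyIntegrable fun g g_smooth g_compact => ?_
  let φ : 𝓢(E, ℂ) := (g_compact.comp_left (g := Complex.ofRealCLM) rfl).toSchwartzMap (by fun_prop)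
  have weak_def := congrArg (fun S : 𝓢'(E, ℂ) => S φ)
    (Lp.fourier_toTemperedDistribution_eq (hf2.toLp f))
  simp only [TemperedDistribution.fourier_apply, Lp.toTemperedDistribution_apply] at weak_def
  calc ∫ x, g x • (𝓕 (hf2.toLp f) : Lp ℂ 2 (volume : Measure E)) x
      = ∫ x, φ x • (𝓕 (hf2.toLp f) : Lp ℂ 2 (volume : Measure E)) x := by simp [φ]
    _ = ∫ x, (𝓕 φ) x • (hf2.toLp f) x := weak_def.symm
    _ = ∫ x, (𝓕 φ) x • f x :=
        integral_congr_ae (hf2.coeFn_toLp.mono fun x hx => by simp only [hx])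
    _ = ∫ x, φ x • 𝓕 f x := by
        rw [fourier_coe, integral_fourier_smul_eq_integral_smul_fourier φ.integrable hf]
    _ = ∫ x, g x • 𝓕 f x := by simp [φ]

lemma eLpNorm_fourier_two (hf : Integrable f) (hf2 : MemLp f 2) :
    eLpNorm (𝓕 f) 2 volume = eLpNorm f 2 volume := by
  rw [← eLpNorm_congr_ae (fourier_toLp_ae_eq hf hf2), ← eLpNorm_congr_ae hf2.coeFn_toLp,
    ← Lp.enorm_def, ← Lp.enorm_def, ← ofReal_norm, ← ofReal_norm, Lp.norm_fourier_eq]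

lemma eLpNorm_fourier_two_le (hf : Integrable f) :
    eLpNorm (𝓕 f) 2 volume ≤ eLpNorm f 2 volume := by
  by_cases hf2 : eLpNorm f 2 volume = ∞
  · simp [hf2]
  · exact (eLpNorm_fourier_two hf ⟨hf.aestronglyMeasurable, Ne.lt_top hf2⟩).le

end Plancherel

section Chirp

variable {E : Type*} [NormedAddCommGroup E] {t : ℝ}

/-- The quadratic phase `z ↦ e^{i|z|²/(4t)}`, which is the kernel of `e^{itΔ}` up to a scalar. -/
def chirp (t : ℝ) (z : E) : ℂ := Complex.exp (Complex.I * ((‖z‖ ^ 2 : ℝ) : ℂ) / (4 * (t : ℂ)))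

@[fun_prop]
lemma continuous_chirp : Continuous (chirp t : E → ℂ) := by
  unfold chirp; fun_prop

@[simp]
lemma enorm_chirp (z : E) : ‖chirp t z‖ₑ = 1 := by
  rw [chirp, mul_div_assoc, ← Complex.enorm_exp_I_mul_ofReal (‖z‖ ^ 2 / (4 * t))]
  norm_cast

lemma chirp_sub [InnerProductSpace ℝ E] (ht : t ≠ 0) (x y : E) :
    chirp t (x - y) = chirp t x *
      (Complex.exp (((-2 * π * inner ℝ y ((4 * π * t)⁻¹ • x) : ℝ) : ℂ) * Complex.I) *
        chirp t y) := by
  rw [chirp, chirp, chirp, ← Complex.exp_add, ← Complex.exp_add, norm_sub_sq_real,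
    inner_smul_right, real_inner_comm]
  have ht' : (t : ℂ) ≠ 0 := by exact_mod_cast ht
  have hπ : (π : ℂ) ≠ 0 := by exact_mod_cast Real.pi_ne_zero
  congr 1
  push_cast
  field_simp
  ring

lemma integrable_chirp_sub_mul_iff [MeasurableSpace E] [OpensMeasurableSpace E] {μ : Measure E}
    {f : E → ℂ} (hf : AEStronglyMeasurable f μ) (x : E) :
    Integrable (fun y => chirp t (x - y) * f y) μ ↔ Integrable f μ := by
  have aestronglyMeasurable_chirp : AEStronglyMeasurable (fun y => chirp t (x - y)) μ :=
    (by fun_prop : Continuous fun y => chirp t (x - y)).aestronglyMeasurable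
  constructor <;> intro h <;> exact h.congr'_enorm (by fun_prop) (.of_forall fun y => by simp)

end Chirp

section HaarDilation

open Module

lemma eLpNorm_comp_smul {E F : Type*} [NormedAddCommGroup E] [NormedSpace ℝ E]
    [FiniteDimensional ℝ E] [MeasurableSpace E] [BorelSpace E] [NormedAddCommGroup F]
    (μ : Measure E) [μ.IsAddHaarMeasure] {c : ℝ} (hc : c ≠ 0) (g : E → F) (q : ℝ≥0∞) :
    eLpNorm (fun x => g (c • x)) q μ =
      ENNReal.ofReal |(c ^ finrank ℝ E)⁻¹| ^ (1 / q).toReal * eLpNorm g q μ := by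
  rw [← smul_eq_mul, ← eLpNorm_smul_measure_of_ne_zero (by simp [pow_pos, hc]),
    ← Measure.map_addHaar_smul μ hc]
  exact ((Homeomorph.smulOfNeZero c hc).measurableEmbedding.eLpNorm_map_measure (g := g)).symm

end HaarDilation

section Schrodinger

open FourierTransform Module

lemma schrod_apply {E : Type*} [NormedAddCommGroup E] [MeasureSpace E] {t : ℝ} (ht : t ≠ 0) (d : ℕ)
    (f : E → ℂ) (x : E) :
    schrod d t f x = (4 * (π : ℂ) * Complex.I * (t : ℂ)) ^ (-(d : ℂ) / 2) *
      ∫ y, chirp t (x - y) * f y := by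
  rw [schrod, if_neg ht]; rfl

lemma enorm_schrod_const (d : ℕ) {t : ℝ} (ht : t ≠ 0) :
    ‖(4 * (π : ℂ) * Complex.I * (t : ℂ)) ^ (-(d : ℂ) / 2)‖ₑ =
      ENNReal.ofReal (4 * π * |t|) ^ (-(d : ℝ) / 2) := by
  have real_exponent : -(d : ℂ) / 2 = ((-(d : ℝ) / 2 : ℝ) : ℂ) := by push_cast; rfl
  rw [real_exponent, ← ofReal_norm, Complex.norm_cpow_real,
    ENNReal.ofReal_rpow_of_pos (by positivity)]
  simp [abs_of_pos Real.pi_pos]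

variable {E : Type*} [NormedAddCommGroup E] [InnerProductSpace ℝ E] [FiniteDimensional ℝ E]
  [MeasurableSpace E] [BorelSpace E] {t r p : ℝ} {θ : ℝ≥0∞} {f g : E → ℂ}

lemma schrod_eq_fourier (ht : t ≠ 0) (d : ℕ) (f : E → ℂ) (x : E) :
    schrod d t f x = (4 * (π : ℂ) * Complex.I * (t : ℂ)) ^ (-(d : ℂ) / 2) *
      (chirp t x * 𝓕 (fun y => chirp t y * f y) ((4 * π * t)⁻¹ • x)) := by
  simp only [schrod_apply ht, Real.fourier_eq', chirp_sub ht, mul_assoc, integral_const_mul,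
    smul_eq_mul]

lemma integrable_chirp_mul (hf : Integrable f) : Integrable fun y => chirp t y * f y := by
  simpa [chirp] using (integrable_chirp_sub_mul_iff (t := t) hf.aestronglyMeasurable 0).2 hf

lemma continuous_schrod (ht : t ≠ 0) (d : ℕ) (hf : Integrable f) : Continuous (schrod d t f) := by
  have := continuous_fourier_of_integrable (integrable_chirp_mul (t := t) hf)
  simp only [funext (schrod_eq_fourier ht d f)]
  fun_prop

lemma schrod_add (ht : t ≠ 0) (d : ℕ) (hf : Integrable f) (hg : Integrable g) (x : E) :
    schrod d t (f + g) x = schrod d t f x + schrod d t g x := by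
  simp only [schrod_apply ht, Pi.add_apply, mul_add]
  rw [integral_add ((integrable_chirp_sub_mul_iff hf.aestronglyMeasurable x).2 hf)
    ((integrable_chirp_sub_mul_iff hg.aestronglyMeasurable x).2 hg), mul_add]

lemma enorm_schrod_le (ht : t ≠ 0) (d : ℕ) (f : E → ℂ) (x : E) :
    ‖schrod d t f x‖ₑ ≤ ENNReal.ofReal (4 * π * |t|) ^ (-(d : ℝ) / 2) * eLpNorm f 1 volume := by
  rw [schrod_apply ht, enorm_mul, enorm_schrod_const d ht, eLpNorm_one_eq_lintegral_enorm]
  gcongr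
  exact (enorm_integral_le_lintegral_enorm _).trans_eq (by simp)

lemma eLpNorm_schrod_two_le (ht : t ≠ 0) (hf : Integrable f) :
    eLpNorm (schrod (finrank ℝ E) t f) 2 volume ≤ eLpNorm f 2 volume := by
  set d := finrank ℝ E with hd
  set g : E → ℂ := fun y => chirp t y * f y
  set a : ℝ≥0∞ := ENNReal.ofReal (4 * π * |t|)
  have a_ne : a ≠ 0 := by simp [a, Real.pi_pos, ht]
  have jacobian : ENNReal.ofReal |((4 * π * t)⁻¹ ^ d)⁻¹| = a ^ d := by
    rw [inv_pow, inv_inv, abs_pow, ENNReal.ofReal_pow (abs_nonneg _), abs_mul,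
      abs_of_pos (by positivity : 0 < 4 * π)]
  have enorm_le (x : E) : ‖schrod d t f x‖ₑ ≤ a ^ (-(d : ℝ) / 2) * ‖𝓕 g ((4 * π * t)⁻¹ • x)‖ₑ := by
    simp [schrod_eq_fourier ht, enorm_mul, enorm_schrod_const d ht, g, a]
  have measurable : AEStronglyMeasurable (fun x => 𝓕 g ((4 * π * t)⁻¹ • x)) volume :=
    ((continuous_fourier_of_integrable (integrable_chirp_mul hf)).comp
      (continuous_const_smul _)).aestronglyMeasurable
  calc _ ≤ a ^ (-(d : ℝ) / 2) * eLpNorm (fun x => 𝓕 g ((4 * π * t)⁻¹ • x)) 2 volume :=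
        eLpNorm_le_mul_eLpNorm_of_ae_le_mul'' _ measurable (.of_forall enorm_le)
    _ = a ^ (-(d : ℝ) / 2) * a ^ ((d : ℝ) / 2) * eLpNorm (𝓕 g) 2 volume := by
        rw [eLpNorm_comp_smul _ (by simp [ht, Real.pi_ne_zero]), ← hd, jacobian,
          ← ENNReal.rpow_natCast_mul, mul_assoc]
        simp [div_eq_mul_inv]
    _ = eLpNorm (𝓕 g) 2 volume := by
        rw [← ENNReal.rpow_add _ _ a_ne ENNReal.ofReal_ne_top, neg_div, neg_add_cancel,
          ENNReal.rpow_zero, one_mul]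
    _ ≤ eLpNorm g 2 volume := eLpNorm_fourier_two_le (integrable_chirp_mul hf)
    _ = eLpNorm f 2 volume := eLpNorm_congr_enorm_ae (.of_forall fun x => by simp [g])

lemma hasEndpointBounds_schrod (ht : t ≠ 0) :
    HasEndpointBounds (schrod (E := E) (finrank ℝ E) t)
      (ENNReal.ofReal (4 * π * |t|) ^ (-(finrank ℝ E : ℝ) / 2)) 1 volume volume where
  aestronglyMeasurable hf := (continuous_schrod ht _ hf).aestronglyMeasurable
  enorm_add_le hf hg := .of_forall fun x => by
    rw [schrod_add ht _ hf hg]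
    exact enorm_add_le _ _
  eLpNorm_top_le _ := eLpNormEssSup_le_of_ae_enorm_bound (.of_forall (enorm_schrod_le ht _ _))
  eLpNorm_two_le hf := by simpa using eLpNorm_schrod_two_le ht hf

/-- For non-integrable `f` the Bochner integral defining `schrod` is `0` by convention. -/
lemma schrod_of_not_integrable (ht : t ≠ 0) (d : ℕ) (hf : AEStronglyMeasurable f)
    (hf_int : ¬Integrable f) : schrod d t f = 0 := by
  ext x
  rw [schrod_apply ht, integral_undef (mt (integrable_chirp_sub_mul_iff hf x).1 hf_int)]
  simp

lemma lorentzNormC_schrod_le (hpr : p.HolderConjugate r) (hθ : 1 ≤ θ) (ht : t ≠ 0)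
    (hf : AEStronglyMeasurable f) :
    lorentzNormC volume (ENNReal.ofReal r) θ (schrod (finrank ℝ E) t f) ≤
      ENNReal.ofReal (4 * π * |t|) ^ (-((finrank ℝ E : ℝ) * (1 / 2 - 1 / r))) * interpConst r *
        lorentzNormC volume (ENNReal.ofReal p) θ f := by
  have a_ne : ENNReal.ofReal (4 * π * |t|) ≠ 0 := by simp [Real.pi_pos, ht]
  by_cases hf_int : Integrable f
  · have interpolated := (hasEndpointBounds_schrod ht).lorentzNorm_le (by simp [a_ne])
      (by finiteness) one_ne_zero ENNReal.one_ne_top hf_int hpr hθ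
    rw [ENNReal.one_rpow, mul_one, ← ENNReal.rpow_mul] at interpolated
    convert! interpolated using 4
    ring
  · have norm_zero := lorentzNorm_zero (ν := (volume : Measure E)) hpr.symm.pos
      (zero_lt_one.trans_le hθ).ne'
    simp [schrod_of_not_integrable ht _ hf hf_int, lorentzNormC, norm_zero]

theorem lorentz_dispersive_estimate_general (E : Type*) [NormedAddCommGroup E]
    [InnerProductSpace ℝ E] [FiniteDimensional ℝ E] [MeasurableSpace E] [BorelSpace E] {r r' : ℝ}
    (hr : 2 < r) (hr' : 1 / r + 1 / r' = 1) {θ : ℝ≥0∞} (hθ : 1 ≤ θ) :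
    ∃ C : ℝ, 0 < C ∧ ∀ t : ℝ, t ≠ 0 → ∀ u₀ : E → ℂ, AEStronglyMeasurable u₀ →
      lorentzNormC volume (ENNReal.ofReal r) θ (schrod (finrank ℝ E) t u₀) ≤
        ENNReal.ofReal (C * |t| ^ (-((finrank ℝ E : ℝ) * (1 / 2 - 1 / r)))) *
          lorentzNormC volume (ENNReal.ofReal r') θ u₀ := by
  have conjugate : r'.HolderConjugate r :=
    (Real.holderConjugate_iff.2 ⟨by linarith, by simpa using hr'⟩).symm
  refine ⟨(4 * π) ^ (-((finrank ℝ E : ℝ) * (1 / 2 - 1 / r))) * (interpConst r).toReal,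
    mul_pos (by positivity) (ENNReal.toReal_pos (interpConst_ne_zero r) (interpConst_ne_top hr)),
    fun t ht u₀ hu₀ => (lorentzNormC_schrod_le conjugate hθ ht hu₀).trans_eq ?_⟩
  rw [mul_right_comm ((4 * π) ^ _), ← Real.mul_rpow (by positivity) (abs_nonneg t),
    ENNReal.ofReal_mul' ENNReal.toReal_nonneg, ENNReal.ofReal_toReal (interpConst_ne_top hr),
    ENNReal.ofReal_rpow_of_pos (by positivity)]

end Schrodinger

/-- **Lorentz-space dispersive estimate.**  Fix `d ≥ 1`, `2 < r < ∞` with conjugate exponent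
`r'`, and `1 ≤ θ ≤ ∞`.  Then for every `t ≠ 0` and `u₀ ∈ L^{r',θ}(ℝ^d)`,
`‖e^{itΔ}u₀‖_{L^{r,θ}} ≤ C |t|^{-d(1/2-1/r)} ‖u₀‖_{L^{r',θ}}` with `C = C(d, r, θ)`. -/
theorem lorentz_dispersive_estimate (d : ℕ) (hd : 1 ≤ d) (r r' : ℝ) (hr : 2 < r)
    (hr' : 1 / r + 1 / r' = 1) (θ : ℝ≥0∞) (hθ : 1 ≤ θ) :
    ∃ C : ℝ, 0 < C ∧
      ∀ (t : ℝ), t ≠ 0 →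
        ∀ u₀ : EuclideanSpace ℝ (Fin d) → ℂ, Measurable u₀ →
          lorentzNormC volume (ENNReal.ofReal r') θ u₀ ≠ ∞ →
          lorentzNormC volume (ENNReal.ofReal r) θ (schrod d t u₀) ≤
            ENNReal.ofReal (C * |t| ^ (-((d : ℝ) * (1 / 2 - 1 / r)))) *
              lorentzNormC volume (ENNReal.ofReal r') θ u₀ := by
  obtain ⟨C, hC, bound⟩ := lorentz_dispersive_estimate_general (EuclideanSpace ℝ (Fin d)) hr hr' hθ
  exact ⟨C, hC, fun t ht u₀ hu₀ _ => by simpa using bound t ht u₀ hu₀.aestronglyMeasurable⟩
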